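/- The action of SL_2(ℂ) × SL_5(ℂ) × ℂ^× on ℂ² ⊗ ⋀²ℂ⁵, where (g,h,t) acts by e ⊗ ω ↦ t·(ge) ⊗ ((⋀²h)ω) extended linearly, has exactly 8 orbits. -/

import Mathlib

noncomputable section

open TensorProduct

/-- The ambient module `ℂ² ⊗ ⋀(ℂ⁵)` (tensor product with the full exterior algebra). -/
abbrev AmbientT9 : Type := TensorProduct ℂ (Fin 2 → ℂ) (ExteriorAlgebra ℂ (Fin 5 → ℂ))

/-- The submodule `ℂ² ⊗ ⋀²ℂ⁵` of `ℂ² ⊗ ⋀(ℂ⁵)`. -/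
def tensorWedgeSq : Submodule ℂ AmbientT9 :=
  LinearMap.range (TensorProduct.map (LinearMap.id : (Fin 2 → ℂ) →ₗ[ℂ] (Fin 2 → ℂ))
    (Submodule.subtype (⋀[ℂ]^2 (Fin 5 → ℂ))))

/-- Two elements of `ℂ² ⊗ ⋀²ℂ⁵` are related if one is obtained from the other by the
action of an element `(g, h, t)` of `SL₂(ℂ) × SL₅(ℂ) × ℂ^×`, where `g` acts on the
first factor, `h` acts on the second factor through `⋀²h` (induced by the action on
`ℂ⁵`), and `t` acts by scaling. -/
def relT9 (v w : tensorWedgeSq) : Prop :=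
  ∃ (g : Matrix.SpecialLinearGroup (Fin 2) ℂ) (h : Matrix.SpecialLinearGroup (Fin 5) ℂ)
    (t : ℂˣ),
    (w : AmbientT9) = (t : ℂ) •
      (TensorProduct.map ((g : Matrix (Fin 2) (Fin 2) ℂ)).mulVecLin
        (ExteriorAlgebra.map ((h : Matrix (Fin 5) (Fin 5) ℂ)).mulVecLin).toLinearMap)
      (v : AmbientT9)

open scoped Matrix

/-- The bivector `u ∧ v` of `ℂ⁵`, written as a skew-symmetric matrix. -/
def wedge (u v : Fin 5 → ℂ) : Matrix (Fin 5) (Fin 5) ℂ :=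
  Matrix.of fun i j => u i * v j - v i * u j

@[simp]
lemma wedge_apply (u v : Fin 5 → ℂ) (i j : Fin 5) : wedge u v i j = u i * v j - v i * u j := rfl

/-- A bivector is decomposable if it is of the form `u ∧ v`. -/
def IsDecomposable (M : Matrix (Fin 5) (Fin 5) ℂ) : Prop := ∃ u v, M = wedge u v

lemma IsDecomposable.plucker {M : Matrix (Fin 5) (Fin 5) ℂ} (hM : IsDecomposable M)
    (i j k l : Fin 5) : M i j * M k l - M i k * M j l + M i l * M j k = 0 := by
  obtain ⟨u, v, rfl⟩ := hM
  simp only [wedge_apply]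
  ring

lemma linearIndependent_five_iff {u v w z f : Fin 5 → ℂ} :
    LinearIndependent ℂ ![u, v, w, z, f] ↔ ∀ a b c d e : ℂ,
      a • u + b • v + c • w + d • z + e • f = 0 → a = 0 ∧ b = 0 ∧ c = 0 ∧ d = 0 ∧ e = 0 := by
  rw [Fintype.linearIndependent_iff]
  refine ⟨fun h a b c d e he => ?_, fun h g hg => ?_⟩
  · have h' := h ![a, b, c, d, e] (by simpa [Fin.sum_univ_five] using he)
    exact ⟨h' 0, h' 1, h' 2, h' 3, h' 4⟩
  · have h' := h (g 0) (g 1) (g 2) (g 3) (g 4) (by simpa [Fin.sum_univ_five] using hg)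
    intro i
    fin_cases i <;> simp [h']

lemma linearIndependent_four_iff {u v w z : Fin 5 → ℂ} :
    LinearIndependent ℂ ![u, v, w, z] ↔ ∀ a b c d : ℂ,
      a • u + b • v + c • w + d • z = 0 → a = 0 ∧ b = 0 ∧ c = 0 ∧ d = 0 := by
  rw [Fintype.linearIndependent_iff]
  refine ⟨fun h a b c d he => ?_, fun h g hg => ?_⟩
  · have h' := h ![a, b, c, d] (by simpa [Fin.sum_univ_four] using he)
    exact ⟨h' 0, h' 1, h' 2, h' 3⟩
  · have h' := h (g 0) (g 1) (g 2) (g 3) (by simpa [Fin.sum_univ_four] using hg)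
    intro i
    fin_cases i <;> simp [h']

lemma linearIndependent_three_iff {u v w : Fin 5 → ℂ} :
    LinearIndependent ℂ ![u, v, w] ↔ ∀ a b c : ℂ,
      a • u + b • v + c • w = 0 → a = 0 ∧ b = 0 ∧ c = 0 := by
  rw [Fintype.linearIndependent_iff]
  refine ⟨fun h a b c he => ?_, fun h g hg => ?_⟩
  · have h' := h ![a, b, c] (by simpa [Fin.sum_univ_three] using he)
    exact ⟨h' 0, h' 1, h' 2⟩
  · have h' := h (g 0) (g 1) (g 2) (by simpa [Fin.sum_univ_three] using hg)
    intro i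
    fin_cases i <;> simp [h']

lemma exists_linearIndependent_five_of_four {u v w z : Fin 5 → ℂ}
    (h : LinearIndependent ℂ ![u, v, w, z]) : ∃ f, LinearIndependent ℂ ![u, v, w, z, f] := by
  obtain ⟨f, hf⟩ := exists_linearIndependent_cons_of_lt_finrank h (by simp)
  refine ⟨f, linearIndependent_five_iff.2 fun a b c d e he => ?_⟩
  have := linearIndependent_five_iff.1 hf e a b c d (by rw [← he]; module)
  tauto

lemma exists_linearIndependent_four_of_three {u v w : Fin 5 → ℂ}
    (h : LinearIndependent ℂ ![u, v, w]) : ∃ z, LinearIndependent ℂ ![u, v, w, z] := by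
  obtain ⟨f, hf⟩ := exists_linearIndependent_cons_of_lt_finrank h (by simp)
  refine ⟨f, linearIndependent_four_iff.2 fun a b c d he => ?_⟩
  have := linearIndependent_four_iff.1 hf d a b c (by rw [← he]; module)
  tauto

lemma exists_linearIndependent_three_of_pair {u v : Fin 5 → ℂ}
    (h : LinearIndependent ℂ ![u, v]) : ∃ w, LinearIndependent ℂ ![u, v, w] := by
  obtain ⟨f, hf⟩ := exists_linearIndependent_cons_of_lt_finrank h (by simp)
  refine ⟨f, linearIndependent_three_iff.2 fun a b c he => ?_⟩
  have := linearIndependent_three_iff.1 hf c a b (by rw [← he]; module)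
  tauto

lemma exists_linearIndependent_five_of_three {u v w : Fin 5 → ℂ}
    (h : LinearIndependent ℂ ![u, v, w]) : ∃ z f, LinearIndependent ℂ ![u, v, w, z, f] := by
  obtain ⟨z, hz⟩ := exists_linearIndependent_four_of_three h
  exact ⟨z, exists_linearIndependent_five_of_four hz⟩

lemma exists_linearIndependent_five_of_pair {u v : Fin 5 → ℂ}
    (h : LinearIndependent ℂ ![u, v]) : ∃ w z f, LinearIndependent ℂ ![u, v, w, z, f] := by
  obtain ⟨w, hw⟩ := exists_linearIndependent_three_of_pair h
  exact ⟨w, exists_linearIndependent_five_of_three hw⟩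

lemma det_ne_zero_of_linearIndependent {b : Fin 5 → Fin 5 → ℂ} (hb : LinearIndependent ℂ b) :
    (Matrix.of b)ᵀ.det ≠ 0 := by
  rw [Matrix.det_transpose, ← isUnit_iff_ne_zero, ← Matrix.isUnit_iff_isUnit_det]
  exact Matrix.linearIndependent_rows_iff_isUnit.1 hb

lemma exists_eq_sum_smul {u v w z f : Fin 5 → ℂ} (h : LinearIndependent ℂ ![u, v, w, z, f])
    (x : Fin 5 → ℂ) : ∃ a b c d e : ℂ, x = a • u + b • v + c • w + d • z + e • f := by
  have hdet := det_ne_zero_of_linearIndependent h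
  set P := (Matrix.of ![u, v, w, z, f])ᵀ with hP
  have hx : x = P.mulVec (P⁻¹.mulVec x) := by
    rw [Matrix.mulVec_mulVec, Matrix.mul_nonsing_inv _ (isUnit_iff_ne_zero.2 hdet),
      Matrix.one_mulVec]
  generalize P⁻¹.mulVec x = y at hx
  refine ⟨y 0, y 1, y 2, y 3, y 4, ?_⟩
  rw [hx]
  ext i
  simp [hP, Matrix.mulVec, dotProduct, Fin.sum_univ_five]
  ring

lemma exists_eq_sum_wedge {u v w z f : Fin 5 → ℂ} (h : LinearIndependent ℂ ![u, v, w, z, f])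
    {A : Matrix (Fin 5) (Fin 5) ℂ} (hA : Aᵀ = -A) :
    ∃ a b c d x : ℂ, ∃ p q r s t : ℂ,
      A = a • wedge u v + b • wedge u w + c • wedge u z + d • wedge u f
        + x • wedge v w + p • wedge v z + q • wedge v f
        + r • wedge w z + s • wedge w f + t • wedge z f := by
  have hdet := isUnit_iff_ne_zero.2 (det_ne_zero_of_linearIndependent h)
  set P := (Matrix.of ![u, v, w, z, f])ᵀ with hP
  have hdet' : IsUnit Pᵀ.det := by rwa [Matrix.det_transpose]
  have hAP : A = P * (P⁻¹ * A * Pᵀ⁻¹) * Pᵀ := by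
    rw [Matrix.mul_assoc, Matrix.nonsing_inv_mul_cancel_right _ _ hdet',
      Matrix.mul_nonsing_inv_cancel_left _ _ hdet]
  have hC : (P⁻¹ * A * Pᵀ⁻¹)ᵀ = -(P⁻¹ * A * Pᵀ⁻¹) := by
    simp [Matrix.transpose_mul, hA, Matrix.transpose_nonsing_inv, Matrix.mul_assoc]
  generalize P⁻¹ * A * Pᵀ⁻¹ = C at hAP hC
  have hC' (i j : Fin 5) : C j i = -C i j := congrFun (congrFun hC i) j
  have hd (i : Fin 5) : C i i = 0 := self_eq_neg.1 (hC' i i)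
  refine ⟨C 0 1, C 0 2, C 0 3, C 0 4, C 1 2, C 1 3, C 1 4, C 2 3, C 2 4, C 3 4, ?_⟩
  rw [hAP]
  ext i j
  simp [hP, Matrix.mul_apply, Fin.sum_univ_five, hd, hC' 0 1, hC' 0 2, hC' 0 3, hC' 0 4,
    hC' 1 2, hC' 1 3, hC' 1 4, hC' 2 3, hC' 2 4, hC' 3 4]
  ring

/-- Splitting off a plane from a nonzero bivector. -/
lemma exists_sub_wedge {A : Matrix (Fin 5) (Fin 5) ℂ} (hA : Aᵀ = -A) {i j : Fin 5}
    (hij : A i j ≠ 0) : ∃ u v : Fin 5 → ℂ, u i = 0 ∧ u j ≠ 0 ∧ v i ≠ 0 ∧ v j = 0 ∧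
      (A - wedge u v)ᵀ = -(A - wedge u v) ∧
      (∀ k, (A - wedge u v) i k = 0) ∧ (∀ k, (A - wedge u v) j k = 0) ∧
      (∀ k, A k i = 0 → A k j = 0 → u k = 0 ∧ v k = 0) := by
  have hA' (i j : Fin 5) : A j i = -A i j := congrFun (congrFun hA i) j
  have hd (i : Fin 5) : A i i = 0 := self_eq_neg.1 (hA' i i)
  refine ⟨fun k => (A i j)⁻¹ * A k i, fun k => A k j, by simp [hd], by simp [hA' i j, hij],
    hij, hd j, ?_, fun k => ?_, fun k => ?_, fun k hi hj => by simp [hi, hj]⟩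
  · ext k l
    simp [hA' k l]
    ring
  · simp [hd, hA' i k]
    field_simp
    ring
  · simp [hd, hA' i j, hA' j k]
    field_simp
    ring

lemma skew_normal_form {A : Matrix (Fin 5) (Fin 5) ℂ} (hA : Aᵀ = -A) :
    A = 0 ∨ ∃ u v w z f, LinearIndependent ℂ ![u, v, w, z, f] ∧
      (A = wedge u v ∨ A = wedge u v + wedge w z) := by
  by_cases h0 : A = 0
  · exact .inl h0
  right
  obtain ⟨i, j, hij⟩ : ∃ i j, A i j ≠ 0 := by
    by_contra! h
    exact h0 (by ext i j; simp [h])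
  obtain ⟨u, v, hui, huj, hvi, hvj, hA', hi, hj, -⟩ := exists_sub_wedge hA hij
  generalize hB : A - wedge u v = B at *
  have hs (k l : Fin 5) : B l k = -B k l := congrFun (congrFun hA' k) l
  by_cases hB0 : B = 0
  · have huv : LinearIndependent ℂ ![u, v] := by
      rw [LinearIndependent.pair_iff]
      intro s t hst
      have h1 := congrFun hst i
      have h2 := congrFun hst j
      simp [hui, hvj, huj, hvi] at h1 h2
      exact ⟨h2, h1⟩
    obtain ⟨w, z, f, h⟩ := exists_linearIndependent_five_of_pair huv
    exact ⟨u, v, w, z, f, h, .inl (sub_eq_zero.1 (hB.trans hB0))⟩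
  obtain ⟨k, l, hkl⟩ : ∃ k l, B k l ≠ 0 := by
    by_contra! h
    exact hB0 (by ext i j; simp [h])
  obtain ⟨w, z, hwk, hwl, hzk, hzl, hB', hk, hl, hz⟩ := exists_sub_wedge hA' hkl
  obtain ⟨hwi, hzi⟩ := hz i (hi k) (hi l)
  obtain ⟨hwj, hzj⟩ := hz j (hj k) (hj l)
  have hli : LinearIndependent ℂ ![u, v, w, z] := by
    rw [linearIndependent_four_iff]
    intro a b c d h
    have h1 := congrFun h i
    have h2 := congrFun h j
    have h3 := congrFun h k
    have h4 := congrFun h l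
    simp [hui, huj, hvi, hvj, hwi, hwj, hzi, hzj] at h1 h2
    simp [h1, h2, hwk, hwl, hzk, hzl] at h3 h4
    exact ⟨h2, h1, h4, h3⟩
  obtain ⟨f, hf⟩ := exists_linearIndependent_five_of_four hli
  refine ⟨u, v, w, z, f, hf, .inr ?_⟩
  rw [← sub_eq_iff_eq_add', hB, ← sub_eq_zero]
  generalize hC : B - wedge w z = C at *
  have hs' (k l : Fin 5) : C l k = -C k l := congrFun (congrFun hB' k) l
  have hCi (m : Fin 5) : C i m = 0 := by simp [← hC, hi, hwi, hzi]
  have hCj (m : Fin 5) : C j m = 0 := by simp [← hC, hj, hwj, hzj]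
  have hd (i : Fin 5) : C i i = 0 := self_eq_neg.1 (hs' i i)
  have hij' : i ≠ j := by rintro rfl; exact huj hui
  have hkl' : k ≠ l := by rintro rfl; exact hwl hwk
  have hik : i ≠ k := by rintro rfl; exact hkl (hi l)
  have hjk : j ≠ k := by rintro rfl; exact hkl (hj l)
  have hil : i ≠ l := by rintro rfl; exact hwl hwi
  have hjl : j ≠ l := by rintro rfl; exact hwl hwj
  ext m n
  have key : m = i ∨ m = j ∨ m = k ∨ m = l ∨ n = i ∨ n = j ∨ n = k ∨ n = l ∨ m = n := by
    omega
  rcases key with rfl | rfl | rfl | rfl | rfl | rfl | rfl | rfl | rfl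
  all_goals first
    | exact hCi _
    | exact hCj _
    | exact hk _
    | exact hl _
    | exact hd _
    | (rw [hs']; simp [hCi, hCj, hk, hl])

/-- The eight normal forms of pencils of bivectors, relative to a basis `b` of `ℂ⁵`. -/
def normalForm (k : Fin 8) (b : Fin 5 → Fin 5 → ℂ) :
    Fin 2 → Matrix (Fin 5) (Fin 5) ℂ :=
  ![![0, 0],
    ![0, wedge (b 0) (b 1)],
    ![0, wedge (b 0) (b 1) + wedge (b 2) (b 3)],
    ![wedge (b 0) (b 2), wedge (b 0) (b 1)],
    ![wedge (b 2) (b 3), wedge (b 0) (b 1)],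
    ![wedge (b 0) (b 2) + wedge (b 1) (b 3), wedge (b 0) (b 1)],
    ![wedge (b 2) (b 3) + wedge (b 0) (b 4), wedge (b 0) (b 1)],
    ![wedge (b 0) (b 1) + wedge (b 2) (b 3), wedge (b 4) (b 0) + wedge (b 1) (b 2)]] k

/-- The pencil spanned by `A` and `B` has one of the eight normal forms in a suitable basis. -/
def HasNormalForm (A B : Matrix (Fin 5) (Fin 5) ℂ) : Prop :=
  ∃ (k : Fin 8) (b : Fin 5 → Fin 5 → ℂ) (g : Matrix (Fin 2) (Fin 2) ℂ),
    LinearIndependent ℂ b ∧ g.det ≠ 0 ∧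
      A = g 0 0 • normalForm k b 0 + g 0 1 • normalForm k b 1 ∧
      B = g 1 0 • normalForm k b 0 + g 1 1 • normalForm k b 1

lemma HasNormalForm.of_eq {A B : Matrix (Fin 5) (Fin 5) ℂ} (k : Fin 8)
    {b : Fin 5 → Fin 5 → ℂ} (hb : LinearIndependent ℂ b) (hA : A = normalForm k b 0)
    (hB : B = normalForm k b 1) : HasNormalForm A B :=
  ⟨k, b, 1, hb, by simp, by simp [hA], by simp [hB]⟩

lemma HasNormalForm.of_comb {A B A' B' : Matrix (Fin 5) (Fin 5) ℂ} (h : HasNormalForm A' B')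
    (a b c d : ℂ) (hD : a * d - b * c ≠ 0) (hA : A' = a • A + b • B) (hB : B' = c • A + d • B) :
    HasNormalForm A B := by
  obtain ⟨k, e, g, he, hg, h1, h2⟩ := h
  have hA' : A = (a * d - b * c)⁻¹ • (d • A' - b • B') := by
    rw [eq_inv_smul_iff₀ hD, hA, hB]
    module
  have hB' : B = (a * d - b * c)⁻¹ • (a • B' - c • A') := by
    rw [eq_inv_smul_iff₀ hD, hA, hB]
    module
  refine ⟨k, e, (a * d - b * c)⁻¹ • (!![d, -b; -c, a] * g), he, ?_, ?_, ?_⟩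
  · rw [Matrix.det_smul, Matrix.det_mul, Matrix.det_fin_two_of]
    refine mul_ne_zero (pow_ne_zero _ (inv_ne_zero hD)) (mul_ne_zero ?_ hg)
    convert hD using 1
    ring
  · rw [hA', h1, h2]
    simp only [Matrix.smul_apply, Matrix.mul_apply, Fin.sum_univ_two, smul_eq_mul,
      Matrix.of_apply, Matrix.cons_val_zero, Matrix.cons_val_one]
    module
  · rw [hB', h1, h2]
    simp only [Matrix.smul_apply, Matrix.mul_apply, Fin.sum_univ_two, smul_eq_mul,
      Matrix.of_apply, Matrix.cons_val_zero, Matrix.cons_val_one]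
    module

lemma hasNormalForm_zero_right {A : Matrix (Fin 5) (Fin 5) ℂ} (hA : Aᵀ = -A) :
    HasNormalForm A 0 := by
  suffices h : HasNormalForm 0 A from
    h.of_comb 0 1 1 0 (by simp) (by simp) (by simp)
  obtain rfl | ⟨u, v, w, z, f, h, rfl | rfl⟩ := skew_normal_form hA
  · exact .of_eq 0 (Pi.basisFun ℂ (Fin 5)).linearIndependent rfl rfl
  · exact .of_eq 1 h rfl rfl
  · exact .of_eq 2 h rfl rfl

lemma hasNormalForm_wedge_wedge {u v : Fin 5 → ℂ} (h : LinearIndependent ℂ ![u, v])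
    (a : Fin 5 → ℂ) : HasNormalForm (wedge u a) (wedge u v) := by
  by_cases h3 : LinearIndependent ℂ ![u, v, a]
  · obtain ⟨z, f, hf⟩ := exists_linearIndependent_five_of_three h3
    exact .of_eq 3 hf rfl rfl
  · obtain ⟨s, t, rfl⟩ : ∃ s t : ℂ, a = s • u + t • v := by
      rw [linearIndependent_three_iff] at h3
      push Not at h3
      obtain ⟨p, q, r, hpqr, hne⟩ := h3
      have hr : r ≠ 0 := by
        rintro rfl
        have := LinearIndependent.pair_iff.1 h p q (by rw [← hpqr]; module)
        exact hne this.1 this.2 rfl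
      refine ⟨-p / r, -q / r, ?_⟩
      rw [← sub_eq_zero, ← smul_right_inj hr, smul_zero, ← hpqr]
      match_scalars <;> field_simp
    obtain ⟨w, z, f, hf⟩ := exists_linearIndependent_five_of_pair h
    refine HasNormalForm.of_comb (A' := 0) (B' := wedge u v) (.of_eq 1 hf rfl rfl)
      1 (-t) 0 1 (by simp) ?_ (by simp)
    ext i j
    dsimp
    ring

lemma hasNormalForm_add_wedge {u v : Fin 5 → ℂ} (h : LinearIndependent ℂ ![u, v])
    (a b : Fin 5 → ℂ) : HasNormalForm (wedge u a + wedge v b) (wedge u v) := by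
  by_cases h4 : LinearIndependent ℂ ![u, v, a, b]
  · obtain ⟨f, hf⟩ := exists_linearIndependent_five_of_four h4
    exact .of_eq 5 hf rfl rfl
  rw [linearIndependent_four_iff] at h4
  push Not at h4
  obtain ⟨p, q, r, s, hrel, hne⟩ := h4
  have h' := LinearIndependent.pair_iff.1 h
  by_cases hs : s = 0
  · subst hs
    have hr : r ≠ 0 := by
      rintro rfl
      have := h' p q (by rw [← hrel]; module)
      exact hne this.1 this.2 rfl rfl
    obtain ⟨t, x, rfl⟩ : ∃ t x : ℂ, a = t • u + x • v := by
      refine ⟨-p / r, -q / r, ?_⟩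
      rw [← sub_eq_zero, ← smul_right_inj hr, smul_zero, ← hrel]
      match_scalars <;> field_simp
    have hvu : LinearIndependent ℂ ![v, -u] := by
      rw [LinearIndependent.pair_iff]
      intro c d hcd
      have := h' (-d) c (by rw [← hcd]; module)
      exact ⟨this.2, neg_eq_zero.1 this.1⟩
    refine (hasNormalForm_wedge_wedge hvu b).of_comb 1 (-x) 0 1 (by simp) ?_ ?_ <;>
    · ext i j
      dsimp
      ring
  · obtain ⟨t, x, y, rfl⟩ : ∃ t x y : ℂ, b = t • u + x • v + y • a := by
      refine ⟨-p / s, -q / s, -r / s, ?_⟩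
      rw [← sub_eq_zero, ← smul_right_inj hs, smul_zero, ← hrel]
      match_scalars <;> field_simp
    have hvu : LinearIndependent ℂ ![u + y • v, v] := by
      rw [LinearIndependent.pair_iff]
      intro c d hcd
      have := h' c (c * y + d) (by rw [← hcd]; module)
      exact ⟨this.1, by simpa [this.1] using this.2⟩
    refine (hasNormalForm_wedge_wedge hvu a).of_comb 1 t 0 1 (by simp) ?_ ?_ <;>
    · ext i j
      dsimp
      ring

lemma hasNormalForm_wedge_add {u v p q r : Fin 5 → ℂ}
    (h : LinearIndependent ℂ ![u, v, p, q, r]) (a b : Fin 5 → ℂ) :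
    HasNormalForm (wedge p q + wedge u a + wedge v b) (wedge u v) := by
  obtain ⟨a0, a1, a2, a3, a4, rfl⟩ := exists_eq_sum_smul h a
  obtain ⟨b0, b1, b2, b3, b4, rfl⟩ := exists_eq_sum_smul h b
  rw [linearIndependent_five_iff] at h
  suffices H : HasNormalForm (wedge (p + a3 • u + b3 • v) (q - a2 • u - b2 • v)
      + wedge (a4 • u + b4 • v) r) (wedge u v) by
    refine H.of_comb 1 (-(a1 - b0 + (a3 * b2 - b3 * a2))) 0 1 (by simp) ?_ (by simp)
    ext i j
    dsimp
    ring
  have key {u' v' : Fin 5 → ℂ} (h' : LinearIndependent ℂ ![u', v', p + a3 • u + b3 • v,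
      q - a2 • u - b2 • v, r]) : HasNormalForm (wedge (p + a3 • u + b3 • v)
      (q - a2 • u - b2 • v) + wedge u' r) (wedge u' v') := .of_eq 6 h' rfl rfl
  by_cases ha : a4 = 0
  · by_cases hb : b4 = 0
    · have h' : LinearIndependent ℂ
          ![u, v, p + a3 • u + b3 • v, q - a2 • u - b2 • v, r] := by
        rw [linearIndependent_five_iff]
        intro c0 c1 c2 c3 c4 hc
        have := h (c0 + c2 * a3 - c3 * a2) (c1 + c2 * b3 - c3 * b2) c2 c3 c4
          (by rw [← hc]; module)
        grind
      have H : HasNormalForm (wedge (p + a3 • u + b3 • v) (q - a2 • u - b2 • v))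
        (wedge u v) := .of_eq 4 h' rfl rfl
      refine H.of_comb 1 0 0 1 (by simp) ?_ (by simp)
      ext i j
      dsimp
      simp only [ha, hb]
      ring
    · refine (key (u' := a4 • u + b4 • v) (v' := -b4⁻¹ • u) ?_).of_comb
        1 0 0 1 (by simp) (by simp) ?_
      · rw [linearIndependent_five_iff]
        intro c0 c1 c2 c3 c4 hc
        have := h (c0 * a4 - c1 * b4⁻¹ + c2 * a3 - c3 * a2) (c0 * b4 + c2 * b3 - c3 * b2) c2 c3 c4
          (by rw [← hc]; module)
        grind
      · ext i j
        dsimp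
        field_simp
        ring
  · refine (key (u' := a4 • u + b4 • v) (v' := a4⁻¹ • v) ?_).of_comb
      1 0 0 1 (by simp) (by simp) ?_
    · rw [linearIndependent_five_iff]
      intro c0 c1 c2 c3 c4 hc
      have := h (c0 * a4 + c2 * a3 - c3 * a2) (c0 * b4 + c1 * a4⁻¹ + c2 * b3 - c3 * b2) c2 c3 c4
        (by rw [← hc]; module)
      grind
    · ext i j
      dsimp
      field_simp
      ring

/-- Every bivector of a three-dimensional space is decomposable. -/
lemma exists_wedge_eq_of_three {u v w z f : Fin 5 → ℂ}
    (h : LinearIndependent ℂ ![u, v, w, z, f]) {a b c : ℂ} (habc : ¬(a = 0 ∧ b = 0 ∧ c = 0)) :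
    ∃ p q r, LinearIndependent ℂ ![u, v, p, q, r] ∧
      a • wedge w z + b • wedge w f + c • wedge z f = wedge p q := by
  rw [linearIndependent_five_iff] at h
  by_cases ha : a = 0
  · by_cases hb : b = 0
    · have hc : c ≠ 0 := by tauto
      refine ⟨c • z, f, w, linearIndependent_five_iff.2 fun c0 c1 c2 c3 c4 h0 => ?_, ?_⟩
      · have := h c0 c1 c4 (c2 * c) c3 (by rw [← h0]; module)
        grind
      · ext i j
        dsimp
        simp only [ha, hb]
        ring
    · refine ⟨b • w + c • z, f, z, linearIndependent_five_iff.2 fun c0 c1 c2 c3 c4 h0 => ?_, ?_⟩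
      · have := h c0 c1 (c2 * b) (c2 * c + c4) c3 (by rw [← h0]; module)
        grind
      · ext i j
        dsimp
        simp only [ha]
        ring
  · refine ⟨w - (c / a) • f, a • z + b • f, f,
      linearIndependent_five_iff.2 fun c0 c1 c2 c3 c4 h0 => ?_, ?_⟩
    · have := h c0 c1 c2 (c3 * a) (c4 + c3 * b - c2 * (c / a)) (by rw [← h0]; module)
      grind
    · ext i j
      dsimp
      field_simp
      ring

lemma hasNormalForm_of_wedge {A : Matrix (Fin 5) (Fin 5) ℂ} (hA : Aᵀ = -A)
    (u v : Fin 5 → ℂ) : HasNormalForm A (wedge u v) := by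
  by_cases huv : LinearIndependent ℂ ![u, v]
  · obtain ⟨w, z, f, h⟩ := exists_linearIndependent_five_of_pair huv
    obtain ⟨a01, a02, a03, a04, a12, a13, a14, a23, a24, a34, rfl⟩ := exists_eq_sum_wedge h hA
    by_cases h0 : a23 = 0 ∧ a24 = 0 ∧ a34 = 0
    · refine (hasNormalForm_add_wedge huv (a01 • v + a02 • w + a03 • z + a04 • f)
        (a12 • w + a13 • z + a14 • f)).of_comb 1 0 0 1 (by simp) ?_ (by simp)
      ext i j
      dsimp
      simp only [h0]
      ring
    · obtain ⟨p, q, r, hpqr, he⟩ := exists_wedge_eq_of_three h h0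
      refine (hasNormalForm_wedge_add hpqr (a01 • v + a02 • w + a03 • z + a04 • f)
        (a12 • w + a13 • z + a14 • f)).of_comb 1 0 0 1 (by simp) ?_ (by simp)
      rw [← he]
      ext i j
      dsimp
      ring
  · rw [LinearIndependent.pair_iff] at huv
    push Not at huv
    obtain ⟨s, t, hst, hne⟩ := huv
    have h0 : wedge u v = 0 := by
      have hst' (i : Fin 5) : s * u i + t * v i = 0 := congrFun hst i
      ext i j
      simp only [wedge_apply, Matrix.zero_apply]
      by_cases hs : s = 0
      · have ht := hne hs
        have hv (i : Fin 5) : v i = 0 := by simpa [hs, ht] using hst' i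
        simp [hv]
      · refine (mul_eq_zero.1 ?_).resolve_left hs
        linear_combination v j * hst' i - v i * hst' j
    rw [h0]
    exact hasNormalForm_zero_right hA

lemma isDecomposable_of_three (v w z : Fin 5 → ℂ) (a b c : ℂ) :
    IsDecomposable (a • wedge v w + b • wedge v z + c • wedge w z) := by
  by_cases ha : a = 0
  · refine ⟨b • v + c • w, z, ?_⟩
    ext i j
    dsimp
    simp only [ha]
    ring
  · refine ⟨v - (c / a) • z, a • w + b • z, ?_⟩
    ext i j
    dsimp
    field_simp
    ring

/-- A bivector of a four-dimensional space is decomposable if its Pfaffian vanishes. -/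
lemma isDecomposable_of_pfaffian (u v w z : Fin 5 → ℂ) {a b c d e k : ℂ}
    (h : a * k - b * e + c * d = 0) :
    IsDecomposable (a • wedge u v + b • wedge u w + c • wedge u z
      + d • wedge v w + e • wedge v z + k • wedge w z) := by
  have key (v w z : Fin 5 → ℂ) {a b c d e k : ℂ} (h : a * k - b * e + c * d = 0) (ha : a ≠ 0) :
      IsDecomposable (a • wedge u v + b • wedge u w + c • wedge u z
        + d • wedge v w + e • wedge v z + k • wedge w z) := by
    refine ⟨u - (d / a) • w - (e / a) • z, a • v + b • w + c • z, ?_⟩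
    have hk : k = (b * e - c * d) / a := by
      field_simp
      linear_combination h
    ext i j
    dsimp
    simp only [hk]
    field_simp
    ring
  by_cases ha : a = 0
  · by_cases hb : b = 0
    · by_cases hc : c = 0
      · convert isDecomposable_of_three v w z d e k using 1
        simp [ha, hb, hc]
      · convert key z v w (a := c) (b := a) (c := b) (d := -e) (e := -k) (k := d)
          (by linear_combination h) hc using 1
        ext i j
        dsimp
        ring
    · convert key w v z (a := b) (b := a) (c := c) (d := -d) (e := k) (k := e)
        (by linear_combination -h) hb using 1
      ext i j
      dsimp
      ring
  · exact key v w z h ha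

lemma hasNormalForm_of_chain {u v w z f : Fin 5 → ℂ}
    (h : LinearIndependent ℂ ![u, v, w, z, f]) (a b c d e k : ℂ)
    (hdec : ∀ x : ℂ, ¬IsDecomposable (wedge f u + (a • wedge u v + b • wedge u w + c • wedge u z
      + d • wedge v w + e • wedge v z + k • wedge w z) + x • (wedge u v + wedge w z))) :
    HasNormalForm (wedge u v + wedge w z) (wedge f u + (a • wedge u v + b • wedge u w
      + c • wedge u z + d • wedge v w + e • wedge v z + k • wedge w z)) := by
  have hde : ¬(d = 0 ∧ e = 0) := by
    rintro ⟨rfl, rfl⟩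
    refine hdec (-k) ⟨f - (a - k) • v - b • w - c • z, u, ?_⟩
    ext i j
    dsimp
    ring
  obtain ⟨x, y, hxy⟩ : ∃ x y : ℂ, d * y - e * x = 1 := by
    by_cases hd : d = 0
    · have he : e ≠ 0 := by tauto
      exact ⟨-e⁻¹, 0, by field_simp; ring⟩
    · exact ⟨0, d⁻¹, by field_simp; ring⟩
  have H : HasNormalForm (wedge u v + wedge (d • w + e • z) (x • w + y • z))
      (wedge (f - (a - k) • v - b • w - c • z) u + wedge v (d • w + e • z)) := by
    refine .of_eq 7 (b := ![u, v, d • w + e • z, x • w + y • z,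
      f - (a - k) • v - b • w - c • z]) ?_ rfl rfl
    rw [linearIndependent_five_iff] at h ⊢
    intro c0 c1 c2 c3 c4 h0
    obtain ⟨h1, h2, h3, h4, h5⟩ := h c0 (c1 - c4 * (a - k)) (c2 * d + c3 * x - c4 * b)
      (c2 * e + c3 * y - c4 * c) c4 (by rw [← h0]; module)
    subst h1 h5
    refine ⟨rfl, by simpa using h2, ?_, ?_, rfl⟩
    · linear_combination y * h3 - x * h4 - c2 * hxy
    · linear_combination d * h4 - e * h3 - c3 * hxy
  refine H.of_comb 1 0 (-k) 1 (by simp) ?_ ?_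
  · ext i j
    dsimp
    linear_combination (w i * z j - z i * w j) * hxy
  · ext i j
    dsimp
    ring

lemma hasNormalForm_of_contraction_aux {u v w z f : Fin 5 → ℂ}
    (h : LinearIndependent ℂ ![u, v, w, z, f]) {p q r s : ℂ} (hp : p ≠ 0) {a b c d e k : ℂ}
    {A B : Matrix (Fin 5) (Fin 5) ℂ} (hA : A = wedge u v + wedge w z)
    (hB : B = wedge f (p • u + q • v + r • w + s • z) + (a • wedge u v + b • wedge u w
      + c • wedge u z + d • wedge v w + e • wedge v z + k • wedge w z))
    (hdec : ∀ x : ℂ, ¬IsDecomposable (B + x • A)) : HasNormalForm A B := by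
  have hA' : A = wedge (p • u + q • v + r • w + s • z) (p⁻¹ • v)
      + wedge (w + (s / p) • v) (z - (r / p) • v) := by
    rw [hA]
    ext i j
    dsimp
    field_simp
    ring
  have hB' : B = wedge f (p • u + q • v + r • w + s • z) +
      ((a - s * b / p + r * c / p) • wedge (p • u + q • v + r • w + s • z) (p⁻¹ • v)
        + (b / p) • wedge (p • u + q • v + r • w + s • z) (w + (s / p) • v)
        + (c / p) • wedge (p • u + q • v + r • w + s • z) (z - (r / p) • v)
        + (a * r - b * q - r * s * b / p + r ^ 2 * c / p + d * p - k * r) •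
          wedge (p⁻¹ • v) (w + (s / p) • v)
        + (a * s - s ^ 2 * b / p - q * c + r * s * c / p + e * p - s * k) •
          wedge (p⁻¹ • v) (z - (r / p) • v)
        + (k + b * s / p - r * c / p) • wedge (w + (s / p) • v) (z - (r / p) • v)) := by
    rw [hB]
    ext i j
    dsimp
    field_simp
    ring
  rw [hA', hB'] at hdec ⊢
  refine hasNormalForm_of_chain ?_ _ _ _ _ _ _ hdec
  rw [linearIndependent_five_iff] at h ⊢
  intro c0 c1 c2 c3 c4 h0
  obtain ⟨h1, h2, h3, h4, h5⟩ := h (c0 * p) (c0 * q + c1 * p⁻¹ + c2 * (s / p) - c3 * (r / p))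
    (c0 * r + c2) (c0 * s + c3) c4 (by rw [← h0]; module)
  grind

lemma hasNormalForm_of_contraction {u v w z f : Fin 5 → ℂ}
    (h : LinearIndependent ℂ ![u, v, w, z, f]) {p q r s a b c d e k : ℂ}
    {A B : Matrix (Fin 5) (Fin 5) ℂ} (hA : A = wedge u v + wedge w z)
    (hB : B = wedge f (p • u + q • v + r • w + s • z) + (a • wedge u v + b • wedge u w
      + c • wedge u z + d • wedge v w + e • wedge v z + k • wedge w z))
    (hdec : ∀ x : ℂ, ¬IsDecomposable (B + x • A)) : HasNormalForm A B := by
  by_cases hp : p = 0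
  · have h' := linearIndependent_five_iff.1 h
    by_cases hq : q = 0
    · by_cases hr : r = 0
      · by_cases hs : s = 0
        · obtain ⟨x, hx⟩ : ∃ x : ℂ, (a + x) * (k + x) - b * e + c * d = 0 := by
            obtain ⟨y, hy⟩ := IsAlgClosed.exists_pow_nat_eq
              ((a - k) ^ 2 / 4 + b * e - c * d) (n := 2) (by simp)
            exact ⟨y - (a + k) / 2, by linear_combination hy⟩
          refine absurd ?_ (hdec x)
          convert isDecomposable_of_pfaffian u v w z hx using 1
          rw [hA, hB]
          ext i j
          dsimp
          simp only [hp, hq, hr, hs]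
          ring
        · refine hasNormalForm_of_contraction_aux (u := z) (v := -w) (w := u) (z := v) (f := f)
            (linearIndependent_five_iff.2 fun c0 c1 c2 c3 c4 h0 => ?_) hs (q := -r) (r := p)
            (s := q) (a := k) (b := -c) (c := -e) (d := b) (e := d) (k := a) ?_ ?_ hdec
          · have := h' c2 c3 (-c1) c0 c4 (by rw [← h0]; module)
            grind
          all_goals
            first | rw [hA] | rw [hB]
            ext i j
            dsimp
            ring
      · refine hasNormalForm_of_contraction_aux (u := w) (v := z) (w := u) (z := v) (f := f)
          (linearIndependent_five_iff.2 fun c0 c1 c2 c3 c4 h0 => ?_) hr (q := s) (r := p)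
          (s := q) (a := k) (b := -b) (c := -d) (d := -c) (e := -e) (k := a) ?_ ?_ hdec
        · have := h' c2 c3 c0 c1 c4 (by rw [← h0]; module)
          grind
        all_goals
          first | rw [hA] | rw [hB]
          ext i j
          dsimp
          ring
    · refine hasNormalForm_of_contraction_aux (u := v) (v := -u) (w := w) (z := z) (f := f)
        (linearIndependent_five_iff.2 fun c0 c1 c2 c3 c4 h0 => ?_) hq (q := -p) (r := r)
        (s := s) (a := a) (b := d) (c := e) (d := -b) (e := -c) (k := k) ?_ ?_ hdec
      · have := h' (-c1) c0 c2 c3 c4 (by rw [← h0]; module)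
        grind
      all_goals
        first | rw [hA] | rw [hB]
        ext i j
        dsimp
        ring
  · exact hasNormalForm_of_contraction_aux h hp hA hB hdec

lemma transpose_smul_add_smul {A B : Matrix (Fin 5) (Fin 5) ℂ} (hA : Aᵀ = -A) (hB : Bᵀ = -B)
    (x y : ℂ) : (x • A + y • B)ᵀ = -(x • A + y • B) := by
  rw [Matrix.transpose_add, Matrix.transpose_smul, Matrix.transpose_smul, hA, hB]
  module

/-- Every pencil of bivectors of `ℂ⁵` has one of the eight normal forms. -/
theorem hasNormalForm_of_skew {A B : Matrix (Fin 5) (Fin 5) ℂ} (hA : Aᵀ = -A) (hB : Bᵀ = -B) :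
    HasNormalForm A B := by
  by_cases hdec : ∃ x y : ℂ, (x, y) ≠ 0 ∧ IsDecomposable (x • A + y • B)
  · obtain ⟨x, y, hxy, u, v, huv⟩ := hdec
    obtain ⟨s, t, hst⟩ : ∃ s t : ℂ, s * y - t * x = 1 := by
      by_cases hx : x = 0
      · have hy : y ≠ 0 := by
          rintro rfl
          exact hxy (by simp [hx])
        exact ⟨y⁻¹, 0, by simp [hy]⟩
      · exact ⟨0, -x⁻¹, by simp [hx]⟩
    exact (hasNormalForm_of_wedge (transpose_smul_add_smul hA hB s t) u v).of_comb s t x y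
      (by simp [hst]) rfl huv.symm
  · push Not at hdec
    have h01 : ¬IsDecomposable A := by simpa using hdec 1 0 (by simp)
    have hdec' (x : ℂ) : ¬IsDecomposable (B + x • A) := by
      simpa [add_comm] using hdec x 1 (by simp)
    obtain rfl | ⟨u, v, w, z, f, h, hA' | hA'⟩ := skew_normal_form hA
    · exact absurd ⟨0, 0, by ext i j; simp⟩ h01
    · exact absurd ⟨u, v, hA'⟩ h01
    · obtain ⟨a, b, c, p, d, e, q, k, r, s, hB'⟩ := exists_eq_sum_wedge h hB
      refine hasNormalForm_of_contraction h hA' (p := -p) (q := -q) (r := -r) (s := -s)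
        (a := a) (b := b) (c := c) (d := d) (e := e) (k := k) ?_ hdec'
      rw [hB']
      ext i j
      dsimp
      ring

/-- Congruence of pencils of bivectors under `GL₂(ℂ) × GL₅(ℂ)`. -/
def PencilEquiv (X Y : Fin 2 → Matrix (Fin 5) (Fin 5) ℂ) : Prop :=
  ∃ (g : Matrix (Fin 2) (Fin 2) ℂ) (h : Matrix (Fin 5) (Fin 5) ℂ), g.det ≠ 0 ∧ h.det ≠ 0 ∧
    ∀ i, Y i = ∑ j, g i j • (h * X j * hᵀ)

lemma sum_smul_congr {X Y : Fin 2 → Matrix (Fin 5) (Fin 5) ℂ} {g : Matrix (Fin 2) (Fin 2) ℂ}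
    {h : Matrix (Fin 5) (Fin 5) ℂ} (hY : ∀ i, Y i = ∑ j, g i j • (h * X j * hᵀ))
    (c : Fin 2 → ℂ) : ∑ i, c i • Y i = h * (∑ j, (c ᵥ* g) j • X j) * hᵀ := by
  simp only [hY, Fin.sum_univ_two, Matrix.vecMul, dotProduct, Matrix.mul_add, Matrix.add_mul,
    Matrix.mul_smul, Matrix.smul_mul]
  module

lemma PencilEquiv.symm {X Y : Fin 2 → Matrix (Fin 5) (Fin 5) ℂ} (hXY : PencilEquiv X Y) :
    PencilEquiv Y X := by
  obtain ⟨g, h, hg, hh, hY⟩ := hXY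
  have hg' := isUnit_iff_ne_zero.2 hg
  have hh' := isUnit_iff_ne_zero.2 hh
  have hht : IsUnit hᵀ.det := by rwa [Matrix.det_transpose]
  refine ⟨g⁻¹, h⁻¹, (Matrix.isUnit_nonsing_inv_det g hg').ne_zero,
    (Matrix.isUnit_nonsing_inv_det h hh').ne_zero, fun i => ?_⟩
  have key := sum_smul_congr hY (g⁻¹ i)
  have hone (j : Fin 2) : (g⁻¹ i ᵥ* g) j = (1 : Matrix (Fin 2) (Fin 2) ℂ) i j := by
    rw [← Matrix.nonsing_inv_mul g hg']
    rfl
  simp only [hone, Matrix.one_apply, ite_smul, one_smul, zero_smul, Finset.sum_ite_eq,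
    Finset.mem_univ, if_true] at key
  have hsum : ∑ j, g⁻¹ i j • (h⁻¹ * Y j * h⁻¹ᵀ) = h⁻¹ * (∑ j, g⁻¹ i j • Y j) * h⁻¹ᵀ := by
    simp only [Finset.mul_sum, Finset.sum_mul, Matrix.mul_smul, Matrix.smul_mul]
  rw [hsum, key, Matrix.transpose_nonsing_inv, Matrix.mul_assoc h,
    Matrix.nonsing_inv_mul_cancel_left _ _ hh', Matrix.mul_nonsing_inv_cancel_right _ _ hht]

lemma mul_wedge_mul_transpose (h : Matrix (Fin 5) (Fin 5) ℂ) (u v : Fin 5 → ℂ) :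
    h * wedge u v * hᵀ = wedge (h *ᵥ u) (h *ᵥ v) := by
  have hw (u v : Fin 5 → ℂ) :
      wedge u v = Matrix.vecMulVec u v - Matrix.vecMulVec v u := by
    ext i j
    simp [Matrix.vecMulVec_apply]
  rw [hw, hw, Matrix.mul_sub, Matrix.sub_mul, Matrix.mul_vecMulVec, Matrix.mul_vecMulVec,
    Matrix.vecMulVec_mul, Matrix.vecMulVec_mul, Matrix.vecMul_transpose, Matrix.vecMul_transpose]

lemma IsDecomposable.congr {M : Matrix (Fin 5) (Fin 5) ℂ} (hM : IsDecomposable M)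
    (h : Matrix (Fin 5) (Fin 5) ℂ) : IsDecomposable (h * M * hᵀ) := by
  obtain ⟨u, v, rfl⟩ := hM
  exact ⟨_, _, mul_wedge_mul_transpose h u v⟩

/-- Some nonzero member of the pencil is decomposable. -/
def HasDecomposable (X : Fin 2 → Matrix (Fin 5) (Fin 5) ℂ) : Prop :=
  ∃ c : Fin 2 → ℂ, c ≠ 0 ∧ IsDecomposable (∑ i, c i • X i)

/-- Two independent members of the pencil are decomposable. -/
def HasTwoDecomposable (X : Fin 2 → Matrix (Fin 5) (Fin 5) ℂ) : Prop :=
  ∃ C : Matrix (Fin 2) (Fin 2) ℂ, C.det ≠ 0 ∧ ∀ i, IsDecomposable (∑ j, C i j • X j)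

/-- All members of the pencil are decomposable. -/
def AllDecomposable (X : Fin 2 → Matrix (Fin 5) (Fin 5) ℂ) : Prop :=
  ∀ c : Fin 2 → ℂ, IsDecomposable (∑ i, c i • X i)

/-- The generators of the pencil are linearly dependent. -/
def IsDegenerate (X : Fin 2 → Matrix (Fin 5) (Fin 5) ℂ) : Prop :=
  ∃ c : Fin 2 → ℂ, c ≠ 0 ∧ ∑ i, c i • X i = 0

/-- The members of the pencil have a common kernel vector. -/
def HasCommonKernel (X : Fin 2 → Matrix (Fin 5) (Fin 5) ℂ) : Prop :=
  ∃ x : Fin 5 → ℂ, x ≠ 0 ∧ ∀ i, X i *ᵥ x = 0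

namespace PencilEquiv

variable {X Y : Fin 2 → Matrix (Fin 5) (Fin 5) ℂ}

lemma exists_comb (h : PencilEquiv X Y) {P : Matrix (Fin 5) (Fin 5) ℂ → Prop}
    (hP : ∀ M, P M → ∀ h : Matrix (Fin 5) (Fin 5) ℂ, P (h * M * hᵀ))
    (hX : ∃ c : Fin 2 → ℂ, c ≠ 0 ∧ P (∑ i, c i • X i)) :
    ∃ c : Fin 2 → ℂ, c ≠ 0 ∧ P (∑ i, c i • Y i) := by
  obtain ⟨g, h, hg, hh, hY⟩ := h
  obtain ⟨c, hc, hcX⟩ := hX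
  have hcg : c ᵥ* g⁻¹ ᵥ* g = c := by
    rw [Matrix.vecMul_vecMul, Matrix.nonsing_inv_mul g (isUnit_iff_ne_zero.2 hg),
      Matrix.vecMul_one]
  refine ⟨c ᵥ* g⁻¹, fun h0 => hc ?_, ?_⟩
  · rw [← hcg, h0, Matrix.zero_vecMul]
  · rw [sum_smul_congr hY, hcg]
    exact hP _ hcX h

lemma hasDecomposable_iff (h : PencilEquiv X Y) : HasDecomposable X ↔ HasDecomposable Y :=
  ⟨h.exists_comb fun _ hM => hM.congr, h.symm.exists_comb fun _ hM => hM.congr⟩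

lemma isDegenerate_iff (h : PencilEquiv X Y) : IsDegenerate X ↔ IsDegenerate Y := by
  have hP (M : Matrix (Fin 5) (Fin 5) ℂ) (hM : M = 0) (h : Matrix (Fin 5) (Fin 5) ℂ) :
      h * M * hᵀ = 0 := by simp [hM]
  exact ⟨h.exists_comb hP, h.symm.exists_comb hP⟩

lemma hasTwoDecomposable_iff (h : PencilEquiv X Y) :
    HasTwoDecomposable X ↔ HasTwoDecomposable Y := by
  suffices H : ∀ {X Y}, PencilEquiv X Y → HasTwoDecomposable X → HasTwoDecomposable Y from
    ⟨H h, H h.symm⟩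
  rintro X Y ⟨g, h, hg, hh, hY⟩ ⟨C, hC, hCX⟩
  have hg' := isUnit_iff_ne_zero.2 hg
  refine ⟨C * g⁻¹, ?_, fun i => ?_⟩
  · rw [Matrix.det_mul]
    exact mul_ne_zero hC (Matrix.isUnit_nonsing_inv_det g hg').ne_zero
  · have hrow : (C * g⁻¹) i ᵥ* g = C i := by
      rw [← Matrix.mul_apply_eq_vecMul, Matrix.nonsing_inv_mul_cancel_right _ _ hg']
    rw [sum_smul_congr hY, hrow]
    exact (hCX i).congr h

lemma allDecomposable_iff (h : PencilEquiv X Y) : AllDecomposable X ↔ AllDecomposable Y := by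
  suffices H : ∀ {X Y}, PencilEquiv X Y → AllDecomposable X → AllDecomposable Y from
    ⟨H h, H h.symm⟩
  rintro X Y ⟨g, h, hg, hh, hY⟩ hX c
  rw [sum_smul_congr hY]
  exact (hX _).congr h

lemma eq_zero_iff (h : PencilEquiv X Y) : X = 0 ↔ Y = 0 := by
  suffices H : ∀ {X Y}, PencilEquiv X Y → X = 0 → Y = 0 from ⟨H h, H h.symm⟩
  rintro X Y ⟨g, h, hg, hh, hY⟩ rfl
  ext1 i
  simp [hY]

lemma hasCommonKernel_iff (h : PencilEquiv X Y) : HasCommonKernel X ↔ HasCommonKernel Y := by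
  suffices H : ∀ {X Y}, PencilEquiv X Y → HasCommonKernel X → HasCommonKernel Y from
    ⟨H h, H h.symm⟩
  rintro X Y ⟨g, h, hg, hh, hY⟩ ⟨x, hx, hX⟩
  have hht : IsUnit hᵀ.det := by rwa [Matrix.det_transpose, isUnit_iff_ne_zero]
  have hhx : hᵀ *ᵥ (hᵀ⁻¹ *ᵥ x) = x := by
    rw [Matrix.mulVec_mulVec, Matrix.mul_nonsing_inv _ hht, Matrix.one_mulVec]
  refine ⟨hᵀ⁻¹ *ᵥ x, fun h0 => hx ?_, fun i => ?_⟩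
  · rw [← hhx, h0, Matrix.mulVec_zero]
  · simp [hY, Matrix.add_mulVec, Matrix.smul_mulVec, ← Matrix.mulVec_mulVec, hhx, hX]

end PencilEquiv

open Classical in
/-- The index of the normal form of a pencil, read off from its invariants. -/
def orbitLabel (X : Fin 2 → Matrix (Fin 5) (Fin 5) ℂ) : Fin 8 :=
  if ¬HasDecomposable X then 7
  else if ¬HasCommonKernel X then 6
  else if IsDegenerate X then if X = 0 then 0 else if AllDecomposable X then 1 else 2
  else if AllDecomposable X then 3
  else if HasTwoDecomposable X then 4
  else 5

lemma PencilEquiv.orbitLabel_eq {X Y : Fin 2 → Matrix (Fin 5) (Fin 5) ℂ}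
    (h : PencilEquiv X Y) : orbitLabel X = orbitLabel Y := by
  rw [orbitLabel, orbitLabel, h.hasDecomposable_iff, h.hasCommonKernel_iff, h.isDegenerate_iff,
    h.allDecomposable_iff, h.hasTwoDecomposable_iff]
  simp only [h.eq_zero_iff]

/-- The normal forms relative to the standard basis. -/
def stdForm (k : Fin 8) : Fin 2 → Matrix (Fin 5) (Fin 5) ℂ :=
  normalForm k fun i => Pi.single i 1

section

variable (b : Fin 5 → Fin 5 → ℂ)

lemma normalForm_one : normalForm 1 b = ![0, wedge (b 0) (b 1)] := rfl

lemma normalForm_two :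
    normalForm 2 b = ![0, wedge (b 0) (b 1) + wedge (b 2) (b 3)] := rfl

lemma normalForm_three : normalForm 3 b = ![wedge (b 0) (b 2), wedge (b 0) (b 1)] := rfl

lemma normalForm_four : normalForm 4 b = ![wedge (b 2) (b 3), wedge (b 0) (b 1)] := rfl

lemma normalForm_five :
    normalForm 5 b = ![wedge (b 0) (b 2) + wedge (b 1) (b 3), wedge (b 0) (b 1)] := rfl

lemma normalForm_seven :
    normalForm 7 b = ![wedge (b 0) (b 1) + wedge (b 2) (b 3),
      wedge (b 4) (b 0) + wedge (b 1) (b 2)] := rfl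

end

lemma hasDecomposable_of_apply {X : Fin 2 → Matrix (Fin 5) (Fin 5) ℂ} (i : Fin 2)
    (h : IsDecomposable (X i)) : HasDecomposable X :=
  ⟨Pi.single i 1, by simp, by simpa [Pi.single_apply] using h⟩

lemma isDegenerate_of_apply {X : Fin 2 → Matrix (Fin 5) (Fin 5) ℂ} (i : Fin 2)
    (h : X i = 0) : IsDegenerate X :=
  ⟨Pi.single i 1, by simp, by simpa [Pi.single_apply] using h⟩

lemma isDecomposable_zero : IsDecomposable 0 := ⟨0, 0, by ext i j; simp⟩

lemma hasDecomposable_stdForm {k : Fin 8} (hk : k ≠ 7) : HasDecomposable (stdForm k) := by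
  by_cases h2 : k = 2
  · subst h2
    exact hasDecomposable_of_apply 0 isDecomposable_zero
  by_cases h0 : k = 0
  · subst h0
    exact hasDecomposable_of_apply 0 isDecomposable_zero
  · refine hasDecomposable_of_apply 1 ⟨Pi.single 0 1, Pi.single 1 1, ?_⟩
    fin_cases k <;> first | rfl | contradiction

lemma wedge_single_mulVec (i j k : Fin 5) (hi : i ≠ k) (hj : j ≠ k) :
    wedge (Pi.single i 1) (Pi.single j 1) *ᵥ Pi.single k 1 = 0 := by
  ext l
  simp [hi.symm, hj.symm]

lemma hasCommonKernel_stdForm {k : Fin 8} (h6 : k ≠ 6) (h7 : k ≠ 7) :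
    HasCommonKernel (stdForm k) := by
  refine ⟨Pi.single 4 1, by simp, fun i => ?_⟩
  have h01 := wedge_single_mulVec 0 1 4 (by decide) (by decide)
  have h02 := wedge_single_mulVec 0 2 4 (by decide) (by decide)
  have h13 := wedge_single_mulVec 1 3 4 (by decide) (by decide)
  have h23 := wedge_single_mulVec 2 3 4 (by decide) (by decide)
  have hz : (0 : Matrix (Fin 5) (Fin 5) ℂ) *ᵥ Pi.single 4 1 = 0 := Matrix.zero_mulVec _
  have h0123 := (Matrix.add_mulVec (wedge (Pi.single 0 1) (Pi.single 1 1))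
    (wedge (Pi.single 2 1) (Pi.single 3 1)) (Pi.single 4 1)).trans (by rw [h01, h23, add_zero])
  have h0213 := (Matrix.add_mulVec (wedge (Pi.single 0 1) (Pi.single 2 1))
    (wedge (Pi.single 1 1) (Pi.single 3 1)) (Pi.single 4 1)).trans (by rw [h02, h13, add_zero])
  fin_cases k <;> fin_cases i <;> first | assumption | contradiction

lemma not_hasDecomposable_stdForm_seven : ¬HasDecomposable (stdForm 7) := by
  rintro ⟨c, hc, hd⟩
  have h1 := hd.plucker 0 1 2 3
  have h2 := hd.plucker 0 4 1 2
  simp [Fin.sum_univ_two, stdForm, normalForm_seven] at h1 h2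
  exact hc (by ext i; fin_cases i <;> simp [h1, h2])

lemma wedge_mulVec (u v x : Fin 5 → ℂ) :
    wedge u v *ᵥ x = (v ⬝ᵥ x) • u - (u ⬝ᵥ x) • v := by
  ext i
  simp only [Matrix.mulVec, dotProduct, wedge_apply, Pi.sub_apply, Pi.smul_apply, smul_eq_mul,
    Finset.sum_mul, ← Finset.sum_sub_distrib]
  exact Finset.sum_congr rfl fun _ _ => by ring

lemma not_hasCommonKernel_stdForm_six : ¬HasCommonKernel (stdForm 6) := by
  rintro ⟨x, hx, h⟩
  have h0 : (wedge (Pi.single 2 1) (Pi.single 3 1) + wedge (Pi.single 0 1) (Pi.single 4 1)) *ᵥ x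
    = 0 := h 0
  have h1 : wedge (Pi.single 0 1) (Pi.single 1 1) *ᵥ x = 0 := h 1
  simp only [Matrix.add_mulVec, wedge_mulVec, single_one_dotProduct] at h0 h1
  have e0 : x 0 = 0 := by simpa using congrFun h1 1
  have e1 : x 1 = 0 := by simpa using congrFun h1 0
  have e2 : x 2 = 0 := by simpa using congrFun h0 3
  have e3 : x 3 = 0 := by simpa using congrFun h0 2
  have e4 : x 4 = 0 := by simpa using congrFun h0 0
  refine hx (funext fun i => ?_)
  fin_cases i <;> assumption

lemma not_isDegenerate_stdForm {k : Fin 8} (h3 : 3 ≤ k) (h5 : k ≤ 5) :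
    ¬IsDegenerate (stdForm k) := by
  rintro ⟨c, hc, h⟩
  have e1 := congrFun (congrFun h 0) 1
  have e2 := congrFun (congrFun h 0) 2
  have e3 := congrFun (congrFun h 2) 3
  obtain rfl | rfl | rfl : k = 3 ∨ k = 4 ∨ k = 5 := by omega
  all_goals
    simp [Fin.sum_univ_two, stdForm, normalForm_three, normalForm_four, normalForm_five] at e1 e2 e3
    exact hc (by ext i; fin_cases i <;> simp_all)

lemma allDecomposable_stdForm_one : AllDecomposable (stdForm 1) := by
  refine fun c => ⟨c 1 • Pi.single 0 1, Pi.single 1 1, ?_⟩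
  ext i j
  simp [Fin.sum_univ_two, stdForm, normalForm_one]
  ring

lemma allDecomposable_stdForm_three : AllDecomposable (stdForm 3) := by
  refine fun c => ⟨Pi.single 0 1, c 0 • Pi.single 2 1 + c 1 • Pi.single 1 1, ?_⟩
  ext i j
  simp [Fin.sum_univ_two, stdForm, normalForm_three]
  ring

lemma not_allDecomposable_stdForm_two : ¬AllDecomposable (stdForm 2) := by
  intro h
  have := (h 1).plucker 0 1 2 3
  simp [Fin.sum_univ_two, stdForm, normalForm_two] at this

lemma not_allDecomposable_stdForm_four : ¬AllDecomposable (stdForm 4) := by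
  intro h
  have := (h 1).plucker 0 1 2 3
  simp [Fin.sum_univ_two, stdForm, normalForm_four] at this

lemma hasTwoDecomposable_stdForm_four : HasTwoDecomposable (stdForm 4) := by
  refine ⟨1, by simp, fun i => ?_⟩
  simp only [Matrix.one_apply, ite_smul, one_smul, zero_smul, Finset.sum_ite_eq,
    Finset.mem_univ, if_true]
  fin_cases i
  · exact ⟨_, _, rfl⟩
  · exact ⟨_, _, rfl⟩

lemma not_hasTwoDecomposable_stdForm_five : ¬HasTwoDecomposable (stdForm 5) := by
  rintro ⟨C, hC, h⟩
  have h0 := (h 0).plucker 0 1 2 3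
  have h1 := (h 1).plucker 0 1 2 3
  simp [Fin.sum_univ_two, stdForm, normalForm_five] at h0 h1
  exact hC (by simp [Matrix.det_fin_two, h0, h1])

lemma AllDecomposable.hasTwoDecomposable {X : Fin 2 → Matrix (Fin 5) (Fin 5) ℂ}
    (h : AllDecomposable X) : HasTwoDecomposable X :=
  ⟨1, by simp, fun i => h _⟩

lemma orbitLabel_stdForm (k : Fin 8) : orbitLabel (stdForm k) = k := by
  have hne {k : Fin 8} (i j : Fin 5) (h : stdForm k 1 i j ≠ 0) : stdForm k ≠ 0 := by
    intro h0
    simp [h0] at h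
  have h1 : stdForm 1 ≠ 0 := hne 0 1 (by simp [stdForm, normalForm_one])
  have h2 : stdForm 2 ≠ 0 := hne 0 1 (by simp [stdForm, normalForm_two])
  have h0 : stdForm 0 = 0 := by
    ext1 i
    fin_cases i <;> rfl
  have h5 : ¬AllDecomposable (stdForm 5) :=
    fun h => not_hasTwoDecomposable_stdForm_five h.hasTwoDecomposable
  by_cases k7 : k = 7
  · subst k7
    simp [orbitLabel, not_hasDecomposable_stdForm_seven]
  by_cases k6 : k = 6
  · subst k6
    simp [orbitLabel, hasDecomposable_stdForm, not_hasCommonKernel_stdForm_six]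
  rw [orbitLabel, if_neg (not_not.2 (hasDecomposable_stdForm k7)),
    if_neg (not_not.2 (hasCommonKernel_stdForm k6 k7))]
  by_cases k2 : k ≤ 2
  · have hdeg : IsDegenerate (stdForm k) := by
      refine isDegenerate_of_apply 0 ?_
      obtain rfl | rfl | rfl : k = 0 ∨ k = 1 ∨ k = 2 := by omega
      all_goals rfl
    rw [if_pos hdeg]
    obtain rfl | rfl | rfl : k = 0 ∨ k = 1 ∨ k = 2 := by omega
    · rw [if_pos h0]
    · rw [if_neg h1, if_pos allDecomposable_stdForm_one]
    · rw [if_neg h2, if_neg not_allDecomposable_stdForm_two]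
  · rw [if_neg (not_isDegenerate_stdForm (by omega) (by omega))]
    obtain rfl | rfl | rfl : k = 3 ∨ k = 4 ∨ k = 5 := by omega
    · rw [if_pos allDecomposable_stdForm_three]
    · rw [if_neg not_allDecomposable_stdForm_four, if_pos hasTwoDecomposable_stdForm_four]
    · rw [if_neg h5, if_neg not_hasTwoDecomposable_stdForm_five]

/-- A pencil in normal form is congruent to the standard normal form. -/
lemma HasNormalForm.exists_pencilEquiv {X : Fin 2 → Matrix (Fin 5) (Fin 5) ℂ}
    (h : HasNormalForm (X 0) (X 1)) : ∃ k, PencilEquiv (stdForm k) X := by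
  obtain ⟨k, b, g, hb, hg, h0, h1⟩ := h
  refine ⟨k, g, (Matrix.of b)ᵀ, hg, det_ne_zero_of_linearIndependent hb, ?_⟩
  have hcol (i : Fin 5) : (Matrix.of b)ᵀ *ᵥ Pi.single i 1 = b i := by
    ext j
    simp
  have hw (i j : Fin 5) : (Matrix.of b)ᵀ * wedge (Pi.single i 1) (Pi.single j 1) *
      (Matrix.of b)ᵀᵀ = wedge (b i) (b j) := by
    rw [mul_wedge_mul_transpose, hcol, hcol]
  have hw' (i j k l : Fin 5) : (Matrix.of b)ᵀ * (wedge (Pi.single i 1) (Pi.single j 1) +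
      wedge (Pi.single k 1) (Pi.single l 1)) * (Matrix.of b)ᵀᵀ =
      wedge (b i) (b j) + wedge (b k) (b l) := by
    rw [Matrix.mul_add, Matrix.add_mul, hw, hw]
  have hz : (Matrix.of b)ᵀ * 0 * (Matrix.of b)ᵀᵀ = 0 := by simp
  have hk (j : Fin 2) : (Matrix.of b)ᵀ * stdForm k j * (Matrix.of b)ᵀᵀ = normalForm k b j := by
    fin_cases k <;> fin_cases j
    exacts [hz, hz, hz, hw 0 1, hz, hw' 0 1 2 3, hw 0 2, hw 0 1, hw 2 3, hw 0 1, hw' 0 2 1 3,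
      hw 0 1, hw' 2 3 0 4, hw 0 1, hw' 0 1 2 3, hw' 4 0 1 2]
  intro i
  simp only [hk, Fin.sum_univ_two]
  fin_cases i
  · exact h0
  · exact h1

/-- The wedge product of two vectors, as an alternating map into skew-symmetric matrices. -/
def wedgeAlternating : (Fin 5 → ℂ) [⋀^Fin 2]→ₗ[ℂ] Matrix (Fin 5) (Fin 5) ℂ where
  toFun m := wedge (m 0) (m 1)
  map_update_add' m i x y := by
    ext k l
    fin_cases i <;> simp <;> ring
  map_update_smul' m i c x := by
    ext k l
    fin_cases i <;> simp <;> ring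
  map_eq_zero_of_eq' v i j h hij := by
    have h01 : v 0 = v 1 := by
      fin_cases i <;> fin_cases j <;> first | exact h | exact h.symm | exact absurd rfl hij
    ext k l
    simp [h01]

/-- The degree two part of an element of `⋀ ℂ⁵`, as a skew-symmetric matrix. -/
def bivectorPart : ExteriorAlgebra ℂ (Fin 5 → ℂ) →ₗ[ℂ] Matrix (Fin 5) (Fin 5) ℂ :=
  ExteriorAlgebra.liftAlternating (Function.update (fun _ => 0) 2 wedgeAlternating)

lemma bivectorPart_ιMulti_two (m : Fin 2 → Fin 5 → ℂ) :
    bivectorPart (ExteriorAlgebra.ιMulti ℂ 2 m) = wedge (m 0) (m 1) := by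
  rw [bivectorPart, ExteriorAlgebra.liftAlternating_apply_ιMulti, Function.update_self]
  rfl

lemma bivectorPart_ιMulti_of_ne {n : ℕ} (hn : n ≠ 2) (m : Fin n → Fin 5 → ℂ) :
    bivectorPart (ExteriorAlgebra.ιMulti ℂ n m) = 0 := by
  rw [bivectorPart, ExteriorAlgebra.liftAlternating_apply_ιMulti, Function.update_of_ne hn]
  rfl

lemma transpose_bivectorPart (x : ExteriorAlgebra ℂ (Fin 5 → ℂ)) :
    (bivectorPart x)ᵀ = -bivectorPart x := by
  suffices H : (Matrix.transposeLinearEquiv (Fin 5) (Fin 5) ℂ ℂ).toLinearMap ∘ₗ bivectorPart =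
      -bivectorPart from LinearMap.congr_fun H x
  refine ExteriorAlgebra.lhom_ext fun n => AlternatingMap.ext fun m => ?_
  change (bivectorPart (ExteriorAlgebra.ιMulti ℂ n m))ᵀ =
    -bivectorPart (ExteriorAlgebra.ιMulti ℂ n m)
  by_cases hn : n = 2
  · subst hn
    rw [bivectorPart_ιMulti_two]
    ext i j
    simp
    ring
  · simp [bivectorPart_ιMulti_of_ne hn]

lemma bivectorPart_map (h : Matrix (Fin 5) (Fin 5) ℂ) (x : ExteriorAlgebra ℂ (Fin 5 → ℂ)) :
    bivectorPart (ExteriorAlgebra.map h.mulVecLin x) = h * bivectorPart x * hᵀ := by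
  suffices H : bivectorPart ∘ₗ (ExteriorAlgebra.map h.mulVecLin).toLinearMap =
      LinearMap.mulRight ℂ hᵀ ∘ₗ LinearMap.mulLeft ℂ h ∘ₗ bivectorPart from
    LinearMap.congr_fun H x
  refine ExteriorAlgebra.lhom_ext fun n => AlternatingMap.ext fun m => ?_
  change bivectorPart (ExteriorAlgebra.map h.mulVecLin (ExteriorAlgebra.ιMulti ℂ n m)) =
    h * bivectorPart (ExteriorAlgebra.ιMulti ℂ n m) * hᵀ
  rw [ExteriorAlgebra.map_apply_ιMulti]
  by_cases hn : n = 2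
  · subst hn
    rw [bivectorPart_ιMulti_two, bivectorPart_ιMulti_two, mul_wedge_mul_transpose]
    rfl
  · simp [bivectorPart_ιMulti_of_ne hn]

/-- The bivector with a given skew-symmetric coefficient matrix. -/
def toBivector : Matrix (Fin 5) (Fin 5) ℂ →ₗ[ℂ] ExteriorAlgebra ℂ (Fin 5 → ℂ) where
  toFun A := ∑ i, ∑ j, (A i j / 2) •
    ExteriorAlgebra.ιMulti ℂ 2 ![(Pi.single i 1 : Fin 5 → ℂ), Pi.single j 1]
  map_add' A B := by simp only [Matrix.add_apply, add_div, add_smul, Finset.sum_add_distrib]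
  map_smul' c A := by
    simp only [Matrix.smul_apply, smul_eq_mul, mul_div_assoc, mul_smul, Finset.smul_sum,
      RingHom.id_apply]

lemma toBivector_apply (A : Matrix (Fin 5) (Fin 5) ℂ) :
    toBivector A = ∑ i, ∑ j, (A i j / 2) •
      ExteriorAlgebra.ιMulti ℂ 2 ![(Pi.single i 1 : Fin 5 → ℂ), Pi.single j 1] := rfl

lemma ιMulti_two_apply (u v : Fin 5 → ℂ) : ExteriorAlgebra.ιMulti ℂ 2 ![u, v] =
    ExteriorAlgebra.ι ℂ u * ExteriorAlgebra.ι ℂ v := by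
  simp [ExteriorAlgebra.ιMulti_apply]

lemma toBivector_mem (A : Matrix (Fin 5) (Fin 5) ℂ) : toBivector A ∈ ⋀[ℂ]^2 (Fin 5 → ℂ) := by
  rw [toBivector_apply]
  exact Submodule.sum_mem _ fun _ _ => Submodule.sum_mem _ fun _ _ => Submodule.smul_mem _ _
    (ExteriorAlgebra.ιMulti_range ℂ 2 ⟨_, rfl⟩)

lemma toBivector_wedge (u v : Fin 5 → ℂ) :
    toBivector (wedge u v) = ExteriorAlgebra.ιMulti ℂ 2 ![u, v] := by
  have hι (u : Fin 5 → ℂ) : ExteriorAlgebra.ι ℂ u =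
      ∑ i, u i • ExteriorAlgebra.ι ℂ (Pi.single i 1 : Fin 5 → ℂ) := by
    conv_lhs => rw [pi_eq_sum_univ' u, map_sum]
    simp only [map_smul]
  have hmul (u v : Fin 5 → ℂ) : ExteriorAlgebra.ι ℂ u * ExteriorAlgebra.ι ℂ v =
      ∑ i, ∑ j, (u i * v j) • (ExteriorAlgebra.ι ℂ (Pi.single i 1 : Fin 5 → ℂ) *
        ExteriorAlgebra.ι ℂ (Pi.single j 1)) := by
    rw [hι u, hι v, Finset.sum_mul_sum]
    simp only [smul_mul_smul_comm]
  have hswap := ExteriorAlgebra.ι_add_mul_swap (R := ℂ) v u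
  have key : toBivector (wedge u v) = (2⁻¹ : ℂ) • (ExteriorAlgebra.ι ℂ u * ExteriorAlgebra.ι ℂ v -
      ExteriorAlgebra.ι ℂ v * ExteriorAlgebra.ι ℂ u) := by
    rw [hmul u v, hmul v u, toBivector_apply, ← Finset.sum_sub_distrib, Finset.smul_sum]
    refine Finset.sum_congr rfl fun i _ => ?_
    rw [← Finset.sum_sub_distrib, Finset.smul_sum]
    refine Finset.sum_congr rfl fun j _ => ?_
    rw [ιMulti_two_apply, wedge_apply]
    module
  rw [key, eq_neg_of_add_eq_zero_left hswap, ιMulti_two_apply]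
  module

lemma toBivector_bivectorPart {x : ExteriorAlgebra ℂ (Fin 5 → ℂ)}
    (hx : x ∈ ⋀[ℂ]^2 (Fin 5 → ℂ)) : toBivector (bivectorPart x) = x := by
  rw [← ExteriorAlgebra.ιMulti_span_fixedDegree] at hx
  induction hx using Submodule.span_induction with
  | mem x hx =>
    obtain ⟨m, rfl⟩ := hx
    rw [bivectorPart_ιMulti_two, toBivector_wedge]
    congr 1
    ext i
    fin_cases i <;> rfl
  | zero => simp
  | add x y _ _ hx hy => rw [map_add, map_add, hx, hy]
  | smul c x _ hx => rw [map_smul, map_smul, hx]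

lemma bivectorPart_toBivector {A : Matrix (Fin 5) (Fin 5) ℂ} (hA : Aᵀ = -A) :
    bivectorPart (toBivector A) = A := by
  have hA' (i j : Fin 5) : A j i = -A i j := congrFun (congrFun hA i) j
  rw [toBivector_apply]
  simp only [map_sum, map_smul, bivectorPart_ιMulti_two]
  ext k l
  simp only [Matrix.sum_apply, Matrix.smul_apply, wedge_apply, Matrix.cons_val_zero,
    Matrix.cons_val_one, smul_eq_mul, mul_sub, Finset.sum_sub_distrib, Pi.single_apply,
    mul_ite, mul_one, mul_zero]
  simp [hA' k l]
  ring

/-- The pencil of skew-symmetric matrices attached to an element of `ℂ² ⊗ ⋀ ℂ⁵`. -/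
def pencil : AmbientT9 →ₗ[ℂ] Fin 2 → Matrix (Fin 5) (Fin 5) ℂ :=
  LinearMap.pi fun i => TensorProduct.lift (((LinearMap.lsmul ℂ _).flip.compl₁₂ bivectorPart
    (LinearMap.proj i)).flip)

lemma pencil_tmul (a : Fin 2 → ℂ) (x : ExteriorAlgebra ℂ (Fin 5 → ℂ)) (i : Fin 2) :
    pencil (a ⊗ₜ x) i = a i • bivectorPart x := rfl

lemma transpose_pencil (v : AmbientT9) (i : Fin 2) : (pencil v i)ᵀ = -pencil v i := by
  induction v using TensorProduct.induction_on with
  | zero => simp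
  | tmul a x => rw [pencil_tmul, Matrix.transpose_smul, transpose_bivectorPart, smul_neg]
  | add x y hx hy => rw [map_add, Pi.add_apply, Matrix.transpose_add, hx, hy, neg_add]

lemma pencil_map (g : Matrix (Fin 2) (Fin 2) ℂ) (h : Matrix (Fin 5) (Fin 5) ℂ) (v : AmbientT9)
    (i : Fin 2) : pencil (TensorProduct.map g.mulVecLin
      (ExteriorAlgebra.map h.mulVecLin).toLinearMap v) i =
        ∑ j, g i j • (h * pencil v j * hᵀ) := by
  induction v using TensorProduct.induction_on with
  | zero => simp
  | tmul a x =>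
    rw [TensorProduct.map_tmul, pencil_tmul]
    simp only [AlgHom.toLinearMap_apply, bivectorPart_map, Matrix.mulVecLin_apply, Matrix.mulVec,
      dotProduct, pencil_tmul, Matrix.mul_smul, Matrix.smul_mul, Finset.sum_smul, mul_smul]
  | add x y hx hy =>
    simp only [map_add, Pi.add_apply, hx, hy, Matrix.mul_add, Matrix.add_mul, smul_add,
      Finset.sum_add_distrib]

/-- The element of `ℂ² ⊗ ⋀²ℂ⁵` with a given pencil of skew-symmetric matrices. -/
def ofPencil (X : Fin 2 → Matrix (Fin 5) (Fin 5) ℂ) : tensorWedgeSq :=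
  ⟨∑ i, (Pi.single i 1 : Fin 2 → ℂ) ⊗ₜ toBivector (X i), Submodule.sum_mem _ fun i _ =>
    ⟨(Pi.single i 1 : Fin 2 → ℂ) ⊗ₜ ⟨toBivector (X i), toBivector_mem _⟩, rfl⟩⟩

lemma pencil_ofPencil {X : Fin 2 → Matrix (Fin 5) (Fin 5) ℂ} (hX : ∀ i, (X i)ᵀ = -X i) :
    pencil (ofPencil X) = X := by
  ext1 i
  simp only [ofPencil, map_sum, Finset.sum_apply, pencil_tmul, bivectorPart_toBivector (hX _)]
  simp [Pi.single_apply]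

lemma sum_single_tmul_pencil (v : tensorWedgeSq) :
    ∑ i, (Pi.single i 1 : Fin 2 → ℂ) ⊗ₜ[ℂ] toBivector (pencil v i) = (v : AmbientT9) := by
  obtain ⟨_, w, rfl⟩ := v
  dsimp only
  induction w using TensorProduct.induction_on with
  | zero => simp
  | tmul a x =>
    simp only [TensorProduct.map_tmul, pencil_tmul, LinearMap.id_apply, Submodule.subtype_apply,
      map_smul, toBivector_bivectorPart x.2, TensorProduct.tmul_smul,
      TensorProduct.smul_tmul']
    rw [← TensorProduct.sum_tmul, ← pi_eq_sum_univ' a]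
  | add x y hx hy =>
    simp only [map_add, Pi.add_apply, TensorProduct.tmul_add, Finset.sum_add_distrib, hx, hy]

lemma ofPencil_pencil (v : tensorWedgeSq) : ofPencil (pencil v) = v :=
  Subtype.ext (sum_single_tmul_pencil v)

lemma smul_map_mem (g : Matrix (Fin 2) (Fin 2) ℂ) (h : Matrix (Fin 5) (Fin 5) ℂ) (t : ℂ)
    (v : tensorWedgeSq) : t • TensorProduct.map g.mulVecLin
      (ExteriorAlgebra.map h.mulVecLin).toLinearMap (v : AmbientT9) ∈ tensorWedgeSq := by
  refine Submodule.smul_mem _ _ ?_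
  obtain ⟨_, w, rfl⟩ := v
  dsimp only
  induction w using TensorProduct.induction_on with
  | zero => simp
  | tmul a x =>
    refine ⟨g.mulVecLin a ⊗ₜ ⟨ExteriorAlgebra.map h.mulVecLin x, ?_⟩, rfl⟩
    obtain ⟨x, hx⟩ := x
    dsimp only
    rw [← ExteriorAlgebra.ιMulti_span_fixedDegree] at hx
    induction hx using Submodule.span_induction with
    | mem x hx =>
      obtain ⟨m, rfl⟩ := hx
      rw [ExteriorAlgebra.map_apply_ιMulti]
      exact ExteriorAlgebra.ιMulti_range ℂ 2 ⟨_, rfl⟩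
    | zero => simp
    | add x y _ _ hx hy => rw [map_add]; exact Submodule.add_mem _ hx hy
    | smul c x _ hx => rw [map_smul]; exact Submodule.smul_mem _ _ hx
  | add x y hx hy => rw [map_add, map_add]; exact Submodule.add_mem _ hx hy

lemma relT9_iff_pencilEquiv (v w : tensorWedgeSq) :
    relT9 v w ↔ PencilEquiv (pencil v) (pencil w) := by
  constructor
  · rintro ⟨g, h, t, hw⟩
    refine ⟨(t : ℂ) • g.1, h.1, ?_, by simp, fun i => ?_⟩
    · rw [Matrix.det_smul]
      simp
    · rw [hw, map_smul, Pi.smul_apply, pencil_map, Finset.smul_sum]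
      simp only [Matrix.smul_apply, smul_smul, smul_eq_mul]
  · rintro ⟨g, h, hg, hh, hY⟩
    obtain ⟨r, hr⟩ := IsAlgClosed.exists_pow_nat_eq g.det two_pos
    obtain ⟨s, hs⟩ := IsAlgClosed.exists_pow_nat_eq h.det (n := 5) (by norm_num)
    have hr0 : r ≠ 0 := by
      rintro rfl
      exact hg (by simp [← hr])
    have hs0 : s ≠ 0 := by
      rintro rfl
      exact hh (by simp [← hs])
    refine ⟨⟨r⁻¹ • g, ?_⟩, ⟨s⁻¹ • h, ?_⟩, Units.mk0 (r * s ^ 2) (by positivity), ?_⟩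
    · rw [Matrix.det_smul, Fintype.card_fin, ← hr, inv_pow, inv_mul_cancel₀ (by positivity)]
    · rw [Matrix.det_smul, Fintype.card_fin, ← hs, inv_pow, inv_mul_cancel₀ (by positivity)]
    · rw [Units.val_mk0]
      refine congrArg Subtype.val (a₁ := w) (a₂ := ⟨_, smul_map_mem _ _ _ v⟩) ?_
      rw [← ofPencil_pencil w, ← ofPencil_pencil ⟨_, smul_map_mem _ _ _ v⟩]
      congr 1
      ext1 i
      rw [hY, map_smul, Pi.smul_apply, pencil_map, Finset.smul_sum]
      refine Finset.sum_congr rfl fun j _ => ?_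
      simp only [Matrix.smul_apply, Matrix.transpose_smul, Matrix.smul_mul, Matrix.mul_smul,
        smul_smul, smul_eq_mul]
      congr 1
      field_simp

lemma transpose_stdForm (k : Fin 8) (i : Fin 2) : (stdForm k i)ᵀ = -stdForm k i := by
  have hz : (0 : Matrix (Fin 5) (Fin 5) ℂ)ᵀ = -0 := by simp
  have hw (u v : Fin 5 → ℂ) : (wedge u v)ᵀ = -wedge u v := by
    ext i j
    simp [mul_comm]
  have hw' (u v x y : Fin 5 → ℂ) : (wedge u v + wedge x y)ᵀ = -(wedge u v + wedge x y) := by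
    rw [Matrix.transpose_add, hw, hw, neg_add]
  fin_cases k <;> fin_cases i
  exacts [hz, hz, hz, hw _ _, hz, hw' _ _ _ _, hw _ _, hw _ _, hw _ _, hw _ _, hw' _ _ _ _,
    hw _ _, hw' _ _ _ _, hw _ _, hw' _ _ _ _, hw' _ _ _ _]

/-- The action of `SL₂(ℂ) × SL₅(ℂ) × ℂ^×` on `ℂ² ⊗ ⋀²ℂ⁵` has exactly 8 orbits. -/
theorem sl2_sl5_action_eight_orbits : Nat.card (Quot relT9) = 8 := by
  have hlabel (v w : tensorWedgeSq) (h : relT9 v w) :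
      orbitLabel (pencil v) = orbitLabel (pencil w) :=
    ((relT9_iff_pencilEquiv v w).1 h).orbitLabel_eq
  rw [← Nat.card_fin 8]
  symm
  refine Nat.card_eq_of_bijective (fun k => Quot.mk relT9 (ofPencil (stdForm k)))
    ⟨fun k l h => ?_, fun q => ?_⟩
  · have := congrArg (Quot.lift (fun v : tensorWedgeSq => orbitLabel (pencil v)) hlabel) h
    simpa only [pencil_ofPencil (transpose_stdForm _), orbitLabel_stdForm] using this
  · induction q using Quot.ind with
    | mk v =>
      obtain ⟨k, hk⟩ := (hasNormalForm_of_skew (transpose_pencil v 0)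
        (transpose_pencil v 1)).exists_pencilEquiv
      refine ⟨k, Quot.sound ((relT9_iff_pencilEquiv _ _).2 ?_)⟩
      rwa [pencil_ofPencil (transpose_stdForm k)]
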